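/- Let S and T be Douthett's parsimonious relations P_{1,0} and P_{2,0} on the 28-element set H of major, minor, and augmented triads, and let M_ST be the submonoid of relations on H generated by {S, T}. An element R of M_ST relates the A major triad 9_M to the F♯ major triad 6_M (i.e. 9_M R 6_M) if and only if R = T·S or R = S·T² (products written as words in the monoid; note T·S = S·T). -/

import Mathlib

/-- The 28-element set of the 24 major and minor triads and the 4 augmented triads:
`Sum.inl n` is the major triad `n_M`, `Sum.inr (Sum.inl n)` is the minor triad `n_m`,
and `Sum.inr (Sum.inr k)` is the augmented triad `k_aug`. -/
abbrev Htriads : Type := (ZMod 12) ⊕ (ZMod 12) ⊕ (ZMod 4)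

/-- Binary relations on `Htriads`. -/
abbrev MRel : Type := Htriads → Htriads → Prop

/-- The monoid of binary relations on `Htriads`: `r * s` relates `x` to `z` iff there is `y`
with `x r y` and `y s z` (i.e. first apply `r`, then `s`), and `1` is the equality relation. -/
instance : Monoid MRel where
  one := fun x y => x = y
  mul := fun r s => fun x z => ∃ y, r x y ∧ s y z
  mul_assoc r s t := by
    funext x z
    apply propext
    constructor
    · rintro ⟨y, ⟨w, hw1, hw2⟩, hy⟩
      exact ⟨w, hw1, y, hw2, hy⟩
    · rintro ⟨w, hw1, y, hy1, hy2⟩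
      exact ⟨y, ⟨w, hw1, hy1⟩, hy2⟩
  one_mul r := by
    funext x z
    apply propext
    constructor
    · rintro ⟨y, rfl, h⟩
      exact h
    · intro h
      exact ⟨x, rfl, h⟩
  mul_one r := by
    funext x z
    apply propext
    constructor
    · rintro ⟨y, h, rfl⟩
      exact h
    · intro h
      exact ⟨z, h, rfl⟩

/-- The major triad on root `n`. -/
def maj (n : ZMod 12) : Htriads := Sum.inl n
/-- The minor triad on root `n`. -/
def mino (n : ZMod 12) : Htriads := Sum.inr (Sum.inl n)
/-- The augmented triad `k_aug`, `k ∈ ℤ/4`. -/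
def aug (k : ZMod 4) : Htriads := Sum.inr (Sum.inr k)

/-- Reduction mod 4 of a pitch class mod 12. -/
def m4 (n : ZMod 12) : ZMod 4 := ZMod.castHom (show (4:ℕ) ∣ 12 by norm_num) (ZMod 4) n

/-- The relation `𝒰`: the symmetric relation relating exactly `n_M` with `(n mod 4)_aug`
and `n_m` with `((n+3) mod 4)_aug`. -/
def Urel : MRel := fun x y =>
  (∃ n : ZMod 12, x = maj n ∧ y = aug (m4 n)) ∨
  (∃ n : ZMod 12, x = aug (m4 n) ∧ y = maj n) ∨
  (∃ n : ZMod 12, x = mino n ∧ y = aug (m4 (n + 3))) ∨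
  (∃ n : ZMod 12, x = aug (m4 (n + 3)) ∧ y = mino n)

/-- The relation `𝒫`: the symmetric relation relating exactly `n_M` with `n_m`,
and each augmented triad with itself. -/
def Prel : MRel := fun x y =>
  (∃ n : ZMod 12, x = maj n ∧ y = mino n) ∨
  (∃ n : ZMod 12, x = mino n ∧ y = maj n) ∨
  (∃ k : ZMod 4, x = aug k ∧ y = aug k)

/-- The relation `ℒ`: the symmetric relation relating exactly `n_M` with `(n+4)_m`,
and each augmented triad with itself. -/
def Lrel : MRel := fun x y =>
  (∃ n : ZMod 12, x = maj n ∧ y = mino (n + 4)) ∨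
  (∃ n : ZMod 12, x = mino (n + 4) ∧ y = maj n) ∨
  (∃ k : ZMod 4, x = aug k ∧ y = aug k)

/-- Douthett's parsimonious relation `𝒮 = P_{1,0}` on major, minor and augmented triads. -/
def Srel : MRel := fun x y =>
  (∃ n : ZMod 12, x = maj n ∧ y = mino n) ∨
  (∃ n : ZMod 12, x = mino n ∧ y = maj n) ∨
  (∃ n : ZMod 12, x = maj n ∧ y = mino (n + 4)) ∨
  (∃ n : ZMod 12, x = mino (n + 4) ∧ y = maj n) ∨
  (∃ n : ZMod 12, x = maj n ∧ y = aug (m4 n)) ∨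
  (∃ n : ZMod 12, x = aug (m4 n) ∧ y = maj n) ∨
  (∃ n : ZMod 12, x = mino n ∧ y = aug (m4 (n + 3))) ∨
  (∃ n : ZMod 12, x = aug (m4 (n + 3)) ∧ y = mino n)

/-- Douthett's parsimonious relation `𝒯 = P_{2,0}` on major, minor and augmented triads. -/
def Trel : MRel := fun x y =>
  (∃ n : ZMod 12, x = maj n ∧ y = maj (n + 4)) ∨
  (∃ n : ZMod 12, x = maj n ∧ y = maj (n + 8)) ∨
  (∃ n : ZMod 12, x = maj n ∧ y = mino (n + 1)) ∨
  (∃ n : ZMod 12, x = mino (n + 1) ∧ y = maj n) ∨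
  (∃ n : ZMod 12, x = maj n ∧ y = mino (n + 5)) ∨
  (∃ n : ZMod 12, x = mino (n + 5) ∧ y = maj n) ∨
  (∃ n : ZMod 12, x = maj n ∧ y = aug (m4 (n + 3))) ∨
  (∃ n : ZMod 12, x = aug (m4 (n + 3)) ∧ y = maj n) ∨
  (∃ n : ZMod 12, x = mino n ∧ y = mino (n + 4)) ∨
  (∃ n : ZMod 12, x = mino n ∧ y = mino (n + 8)) ∨
  (∃ n : ZMod 12, x = mino n ∧ y = aug (m4 n)) ∨
  (∃ n : ZMod 12, x = aug (m4 n) ∧ y = mino n)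

/-!
Grade each triad by its pitch-class sum in `ℤ/12`. Moving along `S` changes the sum by `±1` and
moving along `T` changes it by `0` or `±2`. Moreover `S` relates a triad to a strict majority of
the triads of either adjacent sum, and `T` to a strict majority of those at distance `±2`. Since two
majorities of the same set meet, products of `S` and `T` only see the sums: every such product
other than `1`, `S` and `T` is determined by the set of displacements of the sum that it allows.
This gives `TS = ST = S³`, `T² = S⁴` and `S⁷ = S⁵`, so the monoid consists of `T` and of the powers
`S^k` with `k < 7`. The step from A major to F♯ major displaces the sum by `3`, which is possible
exactly for `S³ = TS` and `S⁵ = ST²`.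
-/

open Finset
open scoped Pointwise

/-- The sum in `ℤ/12` of the three pitch classes of a triad. An augmented triad is spelled from the
representative of its root in `{0, 1, 2, 3}`; the choice does not affect the sum. -/
def pitchSum : Htriads → ZMod 12
  | Sum.inl n => n + (n + 4) + (n + 7)
  | Sum.inr (Sum.inl n) => n + (n + 3) + (n + 7)
  | Sum.inr (Sum.inr k) => k.cast + (k.cast + 4) + (k.cast + 8)

/-- The triads of pitch-class sum `v`, a voice-leading zone in the sense of Cohn. -/
def zone (v : ZMod 12) : Finset Htriads := {x | pitchSum x = v}

theorem mem_zone {v : ZMod 12} {x : Htriads} : x ∈ zone v ↔ pitchSum x = v := by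
  simp only [zone, mem_filter, mem_univ, true_and]

theorem zone_nonempty : ∀ v, (zone v).Nonempty := by decide

/-- The relation under which a triad can move to any triad whose pitch-class sum differs from its
own by an element of `D`. -/
def sumRel (D : Finset (ZMod 12)) : MRel := fun x y => pitchSum y - pitchSum x ∈ D

instance (D : Finset (ZMod 12)) : DecidableRel (sumRel D) := fun x y =>
  inferInstanceAs (Decidable (pitchSum y - pitchSum x ∈ D))

theorem sumRel_mono {D D' : Finset (ZMod 12)} (h : D ⊆ D') : sumRel D ≤ sumRel D' :=
  fun _ _ hxy => h hxy

theorem mul_le_sumRel_add {R R' : MRel} {D D' : Finset (ZMod 12)} (hR : R ≤ sumRel D)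
    (hR' : R' ≤ sumRel D') : R * R' ≤ sumRel (D + D') := by
  rintro x z ⟨y, hxy, hyz⟩
  have hsum : pitchSum z - pitchSum x = (pitchSum y - pitchSum x) + (pitchSum z - pitchSum y) := by
    ring
  rw [sumRel, hsum]
  exact add_mem_add (hR x y hxy) (hR' y z hyz)

/-- `R` relates `x` to more than half of the triads of pitch-class sum `v`. -/
def RelatesMajority (R : MRel) [DecidableRel R] (x : Htriads) (v : ZMod 12) : Prop :=
  #(zone v) < 2 * #{y ∈ zone v | R x y}

instance (R : MRel) [DecidableRel R] (x : Htriads) (v : ZMod 12) :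
    Decidable (RelatesMajority R x v) :=
  inferInstanceAs (Decidable (_ < _))

section Majority

variable {R R' : MRel} [DecidableRel R] [DecidableRel R'] [Std.Symm R']

theorem RelatesMajority.mul {x z : Htriads} {v : ZMod 12} (hR : RelatesMajority R x v)
    (hR' : RelatesMajority R' z v) : (R * R') x z := by
  have hcard : #(zone v) < #{y ∈ zone v | R x y} + #{y ∈ zone v | R' z y} := by
    unfold RelatesMajority at hR hR'
    omega
  obtain ⟨y, hy⟩ :=
    inter_nonempty_of_card_lt_card_add_card (filter_subset _ _) (filter_subset _ _) hcard
  simp only [mem_inter, mem_filter] at hy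
  exact ⟨y, hy.1.2, symm hy.2.2⟩

theorem sumRel_sub_le_mul {D D' : Finset (ZMod 12)}
    (hR : ∀ x, ∀ d ∈ D, RelatesMajority R x (pitchSum x + d))
    (hR' : ∀ x, ∀ d ∈ D', RelatesMajority R' x (pitchSum x + d)) :
    sumRel (D - D') ≤ R * R' := by
  intro x z hxz
  obtain ⟨d, hd, d', hd', hsub⟩ := mem_sub.1 hxz
  have hmid : pitchSum x + d = pitchSum z + d' := by linear_combination hsub
  exact (hR x d hd).mul (hmid ▸ hR' z d' hd')

theorem mul_eq_sumRel {D D' E E' F : Finset (ZMod 12)} (hR : R ≤ sumRel D) (hR' : R' ≤ sumRel D')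
    (hmaj : ∀ x, ∀ d ∈ E, RelatesMajority R x (pitchSum x + d))
    (hmaj' : ∀ x, ∀ d ∈ E', RelatesMajority R' x (pitchSum x + d))
    (hadd : D + D' ⊆ F) (hsub : F ⊆ E - E') : R * R' = sumRel F :=
  ((mul_le_sumRel_add hR hR').trans (sumRel_mono hadd)).antisymm
    ((sumRel_mono hsub).trans (sumRel_sub_le_mul hmaj hmaj'))

end Majority

theorem relatesMajority_sumRel {D : Finset (ZMod 12)} (x : Htriads) {d : ZMod 12} (hd : d ∈ D) :
    RelatesMajority (sumRel D) x (pitchSum x + d) := by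
  have hall : ∀ y ∈ zone (pitchSum x + d), sumRel D x y := by
    intro y hy
    rwa [sumRel, mem_zone.1 hy, add_sub_cancel_left]
  rw [RelatesMajority, filter_true_of_mem hall]
  have := (zone_nonempty (pitchSum x + d)).card_pos
  omega

theorem srel_iff (x y : Htriads) : Srel x y ↔ match x, y with
    | .inl a, .inr (.inl b) | .inr (.inl b), .inl a => b = a ∨ b = a + 4
    | .inl a, .inr (.inr k) | .inr (.inr k), .inl a => k = m4 a
    | .inr (.inl b), .inr (.inr k) | .inr (.inr k), .inr (.inl b) => k = m4 (b + 3)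
    | _, _ => False := by
  rcases x with a | b | k <;> rcases y with c | d | l <;>
    simp [Srel, maj, mino, aug, eq_comm]

theorem trel_iff (x y : Htriads) : Trel x y ↔ match x, y with
    | .inl a, .inl b | .inr (.inl a), .inr (.inl b) => b = a + 4 ∨ b = a + 8
    | .inl a, .inr (.inl b) | .inr (.inl b), .inl a => b = a + 1 ∨ b = a + 5
    | .inl a, .inr (.inr k) | .inr (.inr k), .inl a => k = m4 (a + 3)
    | .inr (.inl b), .inr (.inr k) | .inr (.inr k), .inr (.inl b) => k = m4 b
    | _, _ => False := by
  rcases x with a | b | k <;> rcases y with c | d | l <;>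
    simp [Trel, maj, mino, aug, eq_comm]

instance : DecidableRel Srel := fun x y => by
  refine @decidable_of_iff' _ _ (srel_iff x y) ?_
  rcases x with a | b | k <;> rcases y with c | d | l <;> dsimp only <;> infer_instance

instance : DecidableRel Trel := fun x y => by
  refine @decidable_of_iff' _ _ (trel_iff x y) ?_
  rcases x with a | b | k <;> rcases y with c | d | l <;> dsimp only <;> infer_instance

instance : Std.Symm Srel where
  symm := by decide +kernel

instance : Std.Symm Trel where
  symm := by decide +kernel

theorem srel_le_sumRel : Srel ≤ sumRel {1, -1} := by
  change ∀ x y, Srel x y → sumRel {1, -1} x y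
  decide +kernel

theorem trel_le_sumRel : Trel ≤ sumRel {0, 2, -2} := by
  change ∀ x y, Trel x y → sumRel {0, 2, -2} x y
  decide +kernel

theorem relatesMajority_srel :
    ∀ x, ∀ d ∈ ({1, -1} : Finset (ZMod 12)), RelatesMajority Srel x (pitchSum x + d) := by
  decide +kernel

theorem relatesMajority_trel :
    ∀ x, ∀ d ∈ ({2, -2} : Finset (ZMod 12)), RelatesMajority Trel x (pitchSum x + d) := by
  decide +kernel

-- The sums `v` with `4 * v = 0` are the multiples of `3`, whose zone is a single augmented triad.
theorem relatesMajority_trel_self :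
    ∀ x, 4 * pitchSum x ≠ 0 → RelatesMajority Trel x (pitchSum x) := by
  decide +kernel

/-- The total displacements `k, k - 2, …, -k` in `ℤ/12` produced by `k` successive moves by `±1`. -/
def displacements : ℕ → Finset (ZMod 12)
  | 0 => {0}
  | k + 1 => displacements k + {1, -1}

theorem sumRel_mul_srel (D : Finset (ZMod 12)) : sumRel D * Srel = sumRel (D + {1, -1}) := by
  have hneg : D - {1, -1} = D + {1, -1} := by
    rw [sub_eq_add_neg, show -({1, -1} : Finset (ZMod 12)) = {1, -1} by decide]
  exact mul_eq_sumRel le_rfl srel_le_sumRel (fun x _ => relatesMajority_sumRel x)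
    relatesMajority_srel subset_rfl hneg.ge

theorem srel_mul_srel : Srel * Srel = sumRel (displacements 2) :=
  mul_eq_sumRel srel_le_sumRel srel_le_sumRel relatesMajority_srel relatesMajority_srel
    (by decide) (by decide)

theorem srel_pow_add_two (k : ℕ) : Srel ^ (k + 2) = sumRel (displacements (k + 2)) := by
  induction k with
  | zero => rw [zero_add, pow_two, srel_mul_srel]
  | succ k ih =>
    rw [Nat.add_right_comm, pow_succ, ih, sumRel_mul_srel]
    rfl

theorem srel_pow_le_sumRel (k : ℕ) : Srel ^ k ≤ sumRel (displacements k) := by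
  induction k with
  | zero =>
    rintro x _ rfl
    simp only [sumRel, displacements, sub_self, mem_singleton]
  | succ k ih =>
    rw [pow_succ]
    exact mul_le_sumRel_add ih srel_le_sumRel

theorem trel_mul_srel : Trel * Srel = Srel ^ 3 := by
  rw [srel_pow_add_two 1]
  exact mul_eq_sumRel trel_le_sumRel srel_le_sumRel relatesMajority_trel relatesMajority_srel
    (by decide) (by decide)

theorem srel_mul_trel : Srel * Trel = Srel ^ 3 := by
  rw [srel_pow_add_two 1]
  exact mul_eq_sumRel srel_le_sumRel trel_le_sumRel relatesMajority_srel relatesMajority_trel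
    (by decide) (by decide)

-- Of two triads whose sums differ by `±2`, at least one is not augmented; the path of length two
-- between them passes through the zone of that one.
theorem sumRel_le_trel_mul_trel : sumRel {2, -2} ≤ Trel * Trel := by
  intro x z hxz
  have hback : -(pitchSum z - pitchSum x) ∈ ({2, -2} : Finset (ZMod 12)) := by
    have hneg : ∀ d ∈ ({2, -2} : Finset (ZMod 12)), -d ∈ ({2, -2} : Finset (ZMod 12)) := by decide
    exact hneg _ hxz
  by_cases hx : 4 * pitchSum x = 0
  · have hz : 4 * pitchSum z ≠ 0 := by
      have hfour : ∀ d ∈ ({2, -2} : Finset (ZMod 12)), 4 * d ≠ 0 := by decide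
      have := hfour _ hxz
      rwa [mul_sub, hx, sub_zero] at this
    have hxv := relatesMajority_trel x _ hxz
    rw [add_sub_cancel] at hxv
    exact hxv.mul (relatesMajority_trel_self z hz)
  · have hzv := relatesMajority_trel z _ hback
    rw [neg_sub, add_sub_cancel] at hzv
    exact (relatesMajority_trel_self x hx).mul hzv

theorem trel_mul_trel : Trel * Trel = Srel ^ 4 := by
  rw [srel_pow_add_two 2]
  refine ((mul_le_sumRel_add trel_le_sumRel trel_le_sumRel).trans
    (sumRel_mono (by decide))).antisymm fun x z hxz => ?_
  have hcases : displacements 4 = {2, -2} ∪ ({2, -2} - {2, -2}) := by decide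
  rw [sumRel, hcases, mem_union] at hxz
  rcases hxz with htwo | hsub
  · exact sumRel_le_trel_mul_trel x z htwo
  · exact sumRel_sub_le_mul relatesMajority_trel relatesMajority_trel x z hsub

theorem srel_mul_trel_sq : Srel * Trel ^ 2 = Srel ^ 5 := by
  rw [pow_two, trel_mul_trel, ← pow_succ']

theorem srel_pow_seven : Srel ^ 7 = Srel ^ 5 := by
  rw [srel_pow_add_two 5, srel_pow_add_two 3]
  exact congrArg sumRel (by decide)

theorem exists_srel_pow_eq (k : ℕ) : ∃ j < 7, Srel ^ k = Srel ^ j := by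
  induction k with
  | zero => exact ⟨0, by norm_num, rfl⟩
  | succ k ih =>
    obtain ⟨j, hj, hkj⟩ := ih
    rw [pow_succ, hkj, ← pow_succ]
    obtain hlt | rfl : j + 1 < 7 ∨ j = 6 := by omega
    · exact ⟨j + 1, hlt, rfl⟩
    · exact ⟨5, by norm_num, srel_pow_seven⟩

theorem eq_trel_or_srel_pow_of_mem_closure {R : MRel}
    (hR : R ∈ Submonoid.closure ({Srel, Trel} : Set MRel)) : R = Trel ∨ ∃ k, R = Srel ^ k := by
  induction hR using Submonoid.closure_induction_right with
  | one => exact Or.inr ⟨0, rfl⟩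
  | mul_right R _ Q hQ ih =>
    rcases hQ with rfl | rfl <;> rcases ih with rfl | ⟨k, rfl⟩
    · exact Or.inr ⟨3, trel_mul_srel⟩
    · exact Or.inr ⟨k + 1, (pow_succ _ _).symm⟩
    · exact Or.inr ⟨4, trel_mul_trel⟩
    · cases k with
      | zero => exact Or.inl (one_mul _)
      | succ k =>
        exact Or.inr ⟨k + 3, by rw [pow_succ, mul_assoc, srel_mul_trel, ← pow_add]⟩

theorem three_mem_displacements_iff : ∀ k < 7, 3 ∈ displacements k ↔ k = 3 ∨ k = 5 := by
  decide

theorem sumRel_maj_nine_maj_six_iff {D : Finset (ZMod 12)} :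
    sumRel D (maj 9) (maj 6) ↔ 3 ∈ D := by
  rw [sumRel, show pitchSum (maj 6) - pitchSum (maj 9) = 3 by decide]

/-- an element `R` of the submonoid generated by `{S, T}` relates the A major
triad `9_M` to the F♯ major triad `6_M` iff `R = T·S` or `R = S·T²`. -/
theorem stmt18 (R : MRel) (hR : R ∈ Submonoid.closure ({Srel, Trel} : Set MRel)) :
    R (maj 9) (maj 6) ↔ (R = Trel * Srel ∨ R = Srel * Trel ^ 2) := by
  rw [trel_mul_srel, srel_mul_trel_sq]
  constructor
  · intro h
    rcases eq_trel_or_srel_pow_of_mem_closure hR with rfl | ⟨k, rfl⟩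
    · have hmem := sumRel_maj_nine_maj_six_iff.1 (trel_le_sumRel _ _ h)
      exact absurd hmem (by decide)
    · obtain ⟨j, hj, hkj⟩ := exists_srel_pow_eq k
      rw [hkj] at h ⊢
      have hmem := sumRel_maj_nine_maj_six_iff.1 (srel_pow_le_sumRel j _ _ h)
      rcases (three_mem_displacements_iff j hj).1 hmem with rfl | rfl
      exacts [Or.inl rfl, Or.inr rfl]
  · rintro (rfl | rfl)
    · rw [srel_pow_add_two 1, sumRel_maj_nine_maj_six_iff]
      decide
    · rw [srel_pow_add_two 3, sumRel_maj_nine_maj_six_iff]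
      decide
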